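/- arXiv:2510.11338 — 2 statements merged into one kernel-verified Lean document; each statement's English description precedes it below -/
import Mathlib

section
/- For every nonnegative integer n, the double sum over k and l from 0 to n of C(n,k)*C(n+k,k)*C(n,l)*C(n+l,l)*(-2)^(k+l) / C(k+l+2,k+1) equals 1/4 - (-1)^n*(2n^2+2n-1)/(8n+4). -/
/-!
Write `P` for the shifted Legendre polynomial `∑ (-1)ᵏ C(n,k) C(n+k,k) xᵏ` and `u = x P`. The Beta
integral `1 / C(k+l+2,k+1) = (k+1) ∫₀¹ xᵏ (1-x)ˡ⁺¹ dx` turns the double sum into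
`¼ ∫₀² u'(x) u(2-x) dx`. Folding `[0, 2]` at its midpoint and integrating by parts reduces this to
`∫₀¹ u(x) u'(2-x) dx = ∫₀¹ P(x) q(x) dx`, where `q = x u'(2-x)` has degree only `n + 1`. By
Rodrigues' formula the latter integrates `q⁽ⁿ⁾`, which is affine, against the weight
`(x (1-x))ⁿ`; the weight being symmetric, only the value `q⁽ⁿ⁾(1/2)` matters, and it is read off
from the two leading coefficients of `P`.
-/

section

open Polynomial Nat intervalIntegral

theorem integral_deriv_mul_comp_sub {f f' : ℝ → ℝ} (hf : ∀ x, HasDerivAt f (f' x) x)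
    (hf' : Continuous f') (a c : ℝ) :
    ∫ x in a..2 * c - a, f' x * f (2 * c - x) =
      f c ^ 2 - f a * f (2 * c - a) + 2 * ∫ x in a..c, f x * f' (2 * c - x) := by
  have hfc : Continuous f := continuous_iff_continuousAt.2 fun x => (hf x).continuousAt
  have right_half : ∫ x in c..2 * c - a, f' x * f (2 * c - x) =
      ∫ x in a..c, f x * f' (2 * c - x) := by
    have := integral_comp_sub_left (a := a) (b := c) (fun x => f' x * f (2 * c - x)) (2 * c)
    simp only [sub_sub_cancel, show 2 * c - c = c by ring] at this
    simpa only [mul_comm (f' _)] using this.symm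
  have left_half : ∫ x in a..c, f' x * f (2 * c - x) =
      f c ^ 2 - f a * f (2 * c - a) + ∫ x in a..c, f x * f' (2 * c - x) := by
    have hg (x : ℝ) : HasDerivAt (fun y => f (2 * c - y)) (-f' (2 * c - x)) x :=
      (hf (2 * c - x)).comp_const_sub (2 * c) x
    have := integral_deriv_mul_eq_sub (a := a) (b := c) (fun x _ => hf x) (fun x _ => hg x)
      (hf'.intervalIntegrable _ _) (Continuous.intervalIntegrable (by fun_prop) _ _)
    rw [integral_add (Continuous.intervalIntegrable (by fun_prop) _ _)
      (Continuous.intervalIntegrable (by fun_prop) _ _)] at this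
    simp only [mul_neg, integral_neg, show 2 * c - c = c by ring] at this
    linarith
  have integrable (s t : ℝ) :
      IntervalIntegrable (fun x => f' x * f (2 * c - x)) MeasureTheory.volume s t :=
    Continuous.intervalIntegrable (by fun_prop) s t
  rw [← integral_add_adjacent_intervals (integrable a c) (integrable c _), left_half, right_half]
  ring

theorem eval_iterate_derivative_eq_zero_of_pow_dvd {R : Type*} [CommSemiring R] {p q : R[X]}
    {x : R} {m j : ℕ} (hqx : q.eval x = 0) (hqp : q ^ m ∣ p) (hj : j < m) :
    (derivative^[j] p).eval x = 0 := by
  obtain ⟨r, hr⟩ := pow_sub_dvd_iterate_derivative_of_pow_dvd j hqp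
  rw [hr, eval_mul, eval_pow, hqx, zero_pow (Nat.sub_ne_zero_of_lt hj), zero_mul]

theorem integral_eval_derivative_mul_eval (p q : ℝ[X]) (a b : ℝ) :
    ∫ x in a..b, (derivative p).eval x * q.eval x =
      p.eval b * q.eval b - p.eval a * q.eval a -
        ∫ x in a..b, p.eval x * (derivative q).eval x := by
  rw [integral_mul_deriv_eq_deriv_mul (fun x _ => p.hasDerivAt x) (fun x _ => q.hasDerivAt x)
    ((derivative p).continuous.intervalIntegrable a b)
    ((derivative q).continuous.intervalIntegrable a b), sub_sub_cancel]

theorem integral_eval_iterate_derivative_mul_eval {w : ℝ[X]} {a b : ℝ} {m : ℕ}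
    (ha : ∀ j < m, (derivative^[j] w).eval a = 0) (hb : ∀ j < m, (derivative^[j] w).eval b = 0)
    (q : ℝ[X]) :
    ∫ x in a..b, (derivative^[m] w).eval x * q.eval x =
      (-1) ^ m * ∫ x in a..b, w.eval x * (derivative^[m] q).eval x := by
  induction m generalizing q with
  | zero => simp
  | succ m ih =>
    rw [Function.iterate_succ_apply', integral_eval_derivative_mul_eval, ha m m.lt_succ_self,
      hb m m.lt_succ_self, ih (fun j hj => ha j (by omega)) (fun j hj => hb j (by omega)),
      Function.iterate_succ_apply]
    ring

theorem integral_pow_mul_one_sub_pow (a b : ℕ) :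
    ∫ x in (0 : ℝ)..1, x ^ a * (1 - x) ^ b = a ! * b ! / (a + b + 1)! := by
  have beta_eq : Complex.betaIntegral (a + 1) (b + 1) =
      ((∫ x in (0 : ℝ)..1, x ^ a * (1 - x) ^ b : ℝ) : ℂ) := by
    simp [Complex.betaIntegral, ← intervalIntegral.integral_ofReal]
  have gamma_mul := Complex.Gamma_mul_Gamma_eq_betaIntegral (s := a + 1) (t := b + 1)
    (by simpa using a.cast_add_one_pos) (by simpa using b.cast_add_one_pos)
  rw [show (a : ℂ) + 1 + (b + 1) = ((a + b + 1 : ℕ) : ℂ) + 1 by push_cast; ring, beta_eq]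
    at gamma_mul
  simp only [Complex.Gamma_nat_eq_factorial] at gamma_mul
  rw [eq_div_iff (by positivity), mul_comm]
  exact_mod_cast gamma_mul.symm

theorem inv_choose_eq_integral (k l : ℕ) : ((k + l + 2).choose (k + 1) : ℝ)⁻¹ =
    (k + 1) * ∫ x in (0 : ℝ)..1, x ^ k * (1 - x) ^ (l + 1) := by
  rw [integral_pow_mul_one_sub_pow, show k + l + 2 = (k + 1) + (l + 1) by ring,
    Nat.cast_add_choose, factorial_succ k, ← add_right_comm k 1 (l + 1)]
  push_cast
  field_simp

theorem sum_coeff_mul_coeff_div_choose {p q : ℝ[X]} {M N : ℕ} (hp : p.natDegree < M)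
    (hq : q.natDegree < N) :
    ∑ k ∈ Finset.range M, ∑ l ∈ Finset.range N,
        p.coeff k * q.coeff l / (k + l + 2).choose (k + 1) =
      ∫ x in (0 : ℝ)..1, (derivative (X * p)).eval x * (X * q).eval (1 - x) := by
  have eval_left (x : ℝ) : (derivative (X * p)).eval x =
      ∑ k ∈ Finset.range M, p.coeff k * ((k + 1) * x ^ k) := by
    conv_lhs => rw [p.as_sum_range' M hp]
    simp [Finset.mul_sum, eval_finsetSum, X_mul_monomial, mul_assoc]
  have eval_right (x : ℝ) : (X * q).eval (1 - x) =
      ∑ l ∈ Finset.range N, q.coeff l * (1 - x) ^ (l + 1) := by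
    rw [eval_mul, eval_X, eval_eq_sum_range' hq, Finset.mul_sum]
    exact Finset.sum_congr rfl fun l _ => by ring
  simp_rw [eval_left, eval_right, Finset.sum_mul_sum]
  rw [integral_finsetSum fun k _ => Continuous.intervalIntegrable (by fun_prop) 0 1]
  refine Finset.sum_congr rfl fun k _ => ?_
  rw [integral_finsetSum fun l _ => Continuous.intervalIntegrable (by fun_prop) 0 1]
  refine Finset.sum_congr rfl fun l _ => ?_
  rw [div_eq_mul_inv, inv_choose_eq_integral, ← mul_assoc, ← intervalIntegral.integral_const_mul]
  exact intervalIntegral.integral_congr fun x _ => by ring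

theorem sum_coeff_mul_coeff_mul_two_pow_div_choose {p : ℝ[X]} {N : ℕ} (hp : p.natDegree < N) :
    ∑ k ∈ Finset.range N, ∑ l ∈ Finset.range N,
        p.coeff k * p.coeff l * 2 ^ (k + l) / (k + l + 2).choose (k + 1) =
      p.eval 1 ^ 2 / 4 +
        (∫ x in (0 : ℝ)..1, (X * p).eval x * (derivative (X * p)).eval (2 - x)) / 2 := by
  have X_mul_dilate : X * p.comp (C 2 * X) = C (1 / 2) * (X * p).comp (C 2 * X) := by
    rw [mul_comp, X_comp, ← mul_assoc, ← mul_assoc, ← C_mul]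
    norm_num
  have eval_X_mul_dilate (x : ℝ) :
      (X * p.comp (C 2 * X)).eval x = 1 / 2 * (X * p).eval (2 * x) := by
    simp only [X_mul_dilate, eval_mul, eval_comp, eval_C, eval_X]
  have eval_derivative_X_mul_dilate (x : ℝ) :
      (derivative (X * p.comp (C 2 * X))).eval x = (derivative (X * p)).eval (2 * x) := by
    rw [X_mul_dilate, derivative_C_mul, derivative_comp, derivative_C_mul_X]
    simp only [eval_mul, eval_comp, eval_C, eval_X]
    ring
  have natDegree_lt : (p.comp (C 2 * X)).natDegree < N := by
    rwa [natDegree_comp, natDegree_C_mul_X _ two_ne_zero, mul_one]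
  calc
    _ = ∑ k ∈ Finset.range N, ∑ l ∈ Finset.range N,
          (p.comp (C 2 * X)).coeff k * (p.comp (C 2 * X)).coeff l /
            (k + l + 2).choose (k + 1) := by
      simp_rw [comp_C_mul_X_coeff, pow_add, mul_mul_mul_comm]
    _ = ∫ x in (0 : ℝ)..1, 1 / 2 * ((derivative (X * p)).eval (2 * x) *
          (X * p).eval (2 * 1 - 2 * x)) := by
      rw [sum_coeff_mul_coeff_div_choose natDegree_lt natDegree_lt]
      simp_rw [eval_X_mul_dilate, eval_derivative_X_mul_dilate, mul_sub, mul_left_comm]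
    _ = 1 / 4 * ∫ x in (0 : ℝ)..2 * 1 - 0,
          (derivative (X * p)).eval x * (X * p).eval (2 * 1 - x) := by
      have rescale := integral_comp_mul_left (a := 0) (b := 1)
        (fun x => (derivative (X * p)).eval x * (X * p).eval (2 * 1 - x)) two_ne_zero
      rw [integral_const_mul, rescale, smul_eq_mul, mul_zero, sub_zero]
      ring
    _ = _ := by
      have fold := integral_deriv_mul_comp_sub (X * p).hasDerivAt
        (derivative (X * p)).continuous 0 1
      rw [fold, mul_one, eval_mul, eval_X, one_mul, eval_mul, eval_X, zero_mul]
      ring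

theorem integral_mul_one_sub_pow_mul_eval (n : ℕ) {q : ℝ[X]} (hq : q.natDegree ≤ 1) :
    ∫ x in (0 : ℝ)..1, (x * (1 - x)) ^ n * q.eval x = n ! ^ 2 / (2 * n + 1)! * q.eval (1 / 2) := by
  obtain ⟨a, b, rfl⟩ : ∃ a b : ℝ, q = C a * X + C b := ⟨_, _, eq_X_add_C_of_natDegree_le_one hq⟩
  have split (x : ℝ) : (x * (1 - x)) ^ n * (C a * X + C b).eval x =
      a * (x ^ (n + 1) * (1 - x) ^ n) + b * (x ^ n * (1 - x) ^ n) := by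
    rw [mul_pow]
    simp only [eval_add, eval_mul, eval_C, eval_X]
    ring
  simp_rw [split]
  rw [integral_add (Continuous.intervalIntegrable (by fun_prop) _ _)
      (Continuous.intervalIntegrable (by fun_prop) _ _), integral_const_mul, integral_const_mul,
    integral_pow_mul_one_sub_pow, integral_pow_mul_one_sub_pow, ← two_mul,
    show n + 1 + n + 1 = 2 * n + 1 + 1 by ring, factorial_succ n, factorial_succ (2 * n + 1)]
  simp only [eval_add, eval_mul, eval_C, eval_X]
  push_cast
  field_simp
  ring

theorem iterate_derivative_comp_C_sub_X {R : Type*} [CommRing R] (p : R[X]) (a : R) (k : ℕ) :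
    derivative^[k] (p.comp (C a - X)) = (-1) ^ k * (derivative^[k] p).comp (C a - X) := by
  induction k generalizing p with
  | zero => simp
  | succ k ih => simp [ih (derivative p), derivative_comp, pow_succ]

theorem iterate_derivative_eq_of_natDegree_le_succ {R : Type*} [CommSemiring R] {p : R[X]} {n : ℕ}
    (hp : p.natDegree ≤ n + 1) :
    derivative^[n] p = C (n ! : R) * (C ((n + 1) * p.coeff (n + 1)) * X + C (p.coeff n)) := by
  have natDegree_le : (derivative^[n] p).natDegree ≤ 1 :=
    (natDegree_iterate_derivative p n).trans (by omega)
  have descFactorial_succ : (n + 1).descFactorial n = (n + 1) * n ! := by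
    simpa [factorial_succ] using factorial_mul_descFactorial n.le_succ
  rw [eq_X_add_C_of_natDegree_le_one natDegree_le, coeff_iterate_derivative,
    coeff_iterate_derivative, add_comm 1 n, zero_add, descFactorial_succ, descFactorial_self]
  simp only [nsmul_eq_mul, C_mul, C_add, Nat.cast_mul, Nat.cast_add, Nat.cast_one, C_1]
  ring

/-- The shifted Legendre polynomial over `ℝ`, orthogonal on `[0, 1]` to all polynomials of degree
less than `n`. It carries the sign `(-1) ^ k` in degree `k`, so its value is `1` at `0` and
`(-1) ^ n` at `1`. -/
noncomputable def realShiftedLegendre (n : ℕ) : ℝ[X] :=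
  (shiftedLegendre n).map (algebraMap ℤ ℝ)

namespace realShiftedLegendre

theorem coeff (n k : ℕ) :
    (realShiftedLegendre n).coeff k = (-1) ^ k * n.choose k * (n + k).choose k := by
  simp [realShiftedLegendre, coeff_shiftedLegendre, choose_symm_add (a := n) (b := k)]

theorem natDegree_le (n : ℕ) : (realShiftedLegendre n).natDegree ≤ n :=
  natDegree_map_le.trans (natDegree_shiftedLegendre n).le

theorem natDegree_X_mul_le (n : ℕ) : (X * realShiftedLegendre n).natDegree ≤ n + 1 :=
  natDegree_mul_le.trans <| (Nat.add_le_add natDegree_X_le (natDegree_le n)).trans_eq (add_comm 1 n)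

theorem eval_one (n : ℕ) : (realShiftedLegendre n).eval 1 = (-1) ^ n := by
  have aeval_zero : aeval (0 : ℝ) (shiftedLegendre n) = 1 := by
    rw [← coeff_zero_eq_aeval_zero', coeff_shiftedLegendre]
    simp
  have symm := shiftedLegendre_eval_symm n (1 : ℝ)
  rw [sub_self, aeval_zero, mul_one] at symm
  rwa [realShiftedLegendre, eval_map_algebraMap]

theorem rodrigues (n : ℕ) :
    C (n ! : ℝ) * realShiftedLegendre n = derivative^[n] ((X * (1 - X)) ^ n) := by
  have := congrArg (Polynomial.map (algebraMap ℤ ℝ)) (factorial_mul_shiftedLegendre_eq n)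
  simpa [← iterate_derivative_map, mul_pow, realShiftedLegendre] using this

theorem integral_mul_eval_of_natDegree_le_succ {n : ℕ} {q : ℝ[X]} (hq : q.natDegree ≤ n + 1) :
    ∫ x in (0 : ℝ)..1, (realShiftedLegendre n).eval x * q.eval x =
      (-1) ^ n * n ! / (2 * n + 1)! * (derivative^[n] q).eval (1 / 2) := by
  have natDegree_le : (derivative^[n] q).natDegree ≤ 1 :=
    (natDegree_iterate_derivative q n).trans (by omega)
  have parts := integral_eval_iterate_derivative_mul_eval (a := 0) (b := 1) (m := n)
    (fun j => eval_iterate_derivative_eq_zero_of_pow_dvd (q := X * (1 - X)) (by simp) dvd_rfl)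
    (fun j => eval_iterate_derivative_eq_zero_of_pow_dvd (q := X * (1 - X)) (by simp) dvd_rfl) q
  simp only [← rodrigues, eval_mul, eval_sub, eval_pow, eval_C, eval_X, Polynomial.eval_one,
    mul_assoc, integral_const_mul] at parts
  simp only [← mul_assoc, integral_mul_one_sub_pow_mul_eval n natDegree_le] at parts
  apply mul_left_cancel₀ (show (n ! : ℝ) ≠ 0 by positivity)
  rw [parts]
  ring

theorem coeff_X_mul_self (n : ℕ) :
    (X * realShiftedLegendre n).coeff n = -(n / 2) * (realShiftedLegendre n).coeff n := by
  cases n with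
  | zero => simp
  | succ m =>
    have choose_eq : (m + 1 + (m + 1)).choose (m + 1) = 2 * (m + 1 + m).choose m := by
      rw [← add_assoc, choose_succ_succ, ← choose_symm_add, two_mul]
    simp only [coeff_X_mul, coeff, choose_self, choose_eq, choose_succ_self_right]
    push_cast
    ring

theorem iterate_derivative_X_mul_self (n : ℕ) :
    derivative^[n] (X * realShiftedLegendre n) =
      C (n ! * (realShiftedLegendre n).coeff n) * (C (n + 1 : ℝ) * X - C (n / 2 : ℝ)) := by
  rw [iterate_derivative_eq_of_natDegree_le_succ (natDegree_X_mul_le n), coeff_X_mul,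
    coeff_X_mul_self]
  simp only [C_mul, C_neg]
  ring

theorem factorial_sq_mul_coeff_self (n : ℕ) :
    (n ! : ℝ) ^ 2 * (realShiftedLegendre n).coeff n = (-1) ^ n * (2 * n)! := by
  rw [coeff, choose_self, ← two_mul, two_mul n, Nat.cast_add_choose]
  field_simp
  simp

theorem eval_half_iterate_derivative_reflect_mul_X (n : ℕ) :
    (derivative^[n] (derivative ((X * realShiftedLegendre n).comp (C 2 - X)) * X)).eval (1 / 2) =
      (-1) ^ n * n ! * (realShiftedLegendre n).coeff n * (n ^ 2 + n - 1 / 2) := by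
  have iterate_succ : derivative^[n + 1] (X * realShiftedLegendre n) =
      C (n ! * (realShiftedLegendre n).coeff n * (n + 1)) := by
    rw [Function.iterate_succ_apply', iterate_derivative_X_mul_self, derivative_C_mul]
    simp [mul_assoc]
  rw [iterate_derivative_derivative_mul_X, iterate_derivative_comp_C_sub_X,
    iterate_derivative_comp_C_sub_X, iterate_succ, iterate_derivative_X_mul_self]
  simp only [C_comp, eval_add, eval_mul, eval_sub, eval_comp, eval_C, eval_X, eval_pow, eval_neg,
    Polynomial.eval_one, nsmul_eq_mul, eval_natCast]
  ring

theorem natDegree_derivative_reflect_mul_X_le (n : ℕ) :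
    (derivative ((X * realShiftedLegendre n).comp (C 2 - X)) * X).natDegree ≤ n + 1 := by
  have natDegree_reflect : (C 2 - X : ℝ[X]).natDegree ≤ 1 := by compute_degree
  have natDegree_reflected : ((X * realShiftedLegendre n).comp (C 2 - X)).natDegree ≤ n + 1 :=
    natDegree_comp_le.trans <|
      (Nat.mul_le_mul (natDegree_X_mul_le n) natDegree_reflect).trans_eq (mul_one _)
  refine natDegree_mul_le.trans ?_
  grind [natDegree_X_le, natDegree_derivative_le]

theorem integral_X_mul_self_mul_derivative_reflect (n : ℕ) :
    ∫ x in (0 : ℝ)..1, (X * realShiftedLegendre n).eval x *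
        (derivative (X * realShiftedLegendre n)).eval (2 - x) =
      -(-1) ^ n * (n ^ 2 + n - 1 / 2) / (2 * n + 1) := by
  have integrand_eq (x : ℝ) : (X * realShiftedLegendre n).eval x *
      (derivative (X * realShiftedLegendre n)).eval (2 - x) =
      -((realShiftedLegendre n).eval x *
        (derivative ((X * realShiftedLegendre n).comp (C 2 - X)) * X).eval x) := by
    simp only [derivative_comp, derivative_sub, derivative_C, derivative_X, eval_mul, eval_comp,
      eval_sub, eval_C, eval_X, eval_zero, Polynomial.eval_one]
    ring
  simp_rw [integrand_eq]
  rw [integral_neg,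
    integral_mul_eval_of_natDegree_le_succ (natDegree_derivative_reflect_mul_X_le n),
    eval_half_iterate_derivative_reflect_mul_X]
  have sign_sq : ((-1 : ℝ) ^ n) ^ 2 = 1 := by
    rw [← pow_mul, (even_two.mul_left n).neg_one_pow]
  calc
    _ = -((-1) ^ n * (-1) ^ n * ((n ! : ℝ) ^ 2 * (realShiftedLegendre n).coeff n) /
          (2 * n + 1)!) * (n ^ 2 + n - 1 / 2) := by ring
    _ = _ := by
      rw [factorial_sq_mul_coeff_self, ← sq, sign_sq, factorial_succ (2 * n)]
      push_cast
      field_simp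

end realShiftedLegendre

end

theorem stmt_1 (n : ℕ) :
    ∑ k ∈ Finset.range (n+1), ∑ l ∈ Finset.range (n+1),
      ((n.choose k : ℚ) * ((n+k).choose k) * (n.choose l) * ((n+l).choose l) * (-2)^(k+l))
        / (((k+l+2).choose (k+1) : ℚ))
    = 1/4 - (-1)^n * (2*(n:ℚ)^2 + 2*n - 1) / (8*(n:ℚ) + 4) := by
  have coeff_mul (k l : ℕ) : (n.choose k * (n + k).choose k * n.choose l * (n + l).choose l *
      (-2) ^ (k + l) : ℝ) =
      (realShiftedLegendre n).coeff k * (realShiftedLegendre n).coeff l * 2 ^ (k + l) := by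
    rw [realShiftedLegendre.coeff, realShiftedLegendre.coeff, neg_pow]
    ring
  have sum_eq := sum_coeff_mul_coeff_mul_two_pow_div_choose
    (Nat.lt_succ_of_le (realShiftedLegendre.natDegree_le n))
  rw [realShiftedLegendre.eval_one,
    realShiftedLegendre.integral_X_mul_self_mul_derivative_reflect] at sum_eq
  rw [← Rat.cast_inj (α := ℝ)]
  push_cast
  simp_rw [coeff_mul]
  rw [sum_eq, ← pow_mul, (even_two.mul_left n).neg_one_pow]
  field_simp
  ring
end

section
/- Define t_n(x) = Σ_{k=0}^n C(n,k)*C(x,k)*C(x+k,k)*2^k. For any odd prime p and p-adic integer x with 2x ≢ −1 (mod p), one has Σ_{n=0}^{p-1} t_n(x)^2 ≡ (−1)^{⟨x⟩_p} · (p + 2(x − ⟨x⟩_p)) / (2x+1) (mod p^2). -/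
/-- Generalized binomial coefficient `C(x, k) = x(x-1)⋯(x-k+1)/k!` in `ℚ_[p]`. -/
noncomputable def gbinom {p : ℕ} [Fact p.Prime] (x : ℚ_[p]) (k : ℕ) : ℚ_[p] :=
  (∏ i ∈ Finset.range k, (x - i)) / (k.factorial : ℚ_[p])

/-- The sequence `t_n(x) = ∑_{k=0}^n C(n,k) C(x,k) C(x+k,k) 2^k`. -/
noncomputable def tseq {p : ℕ} [Fact p.Prime] (x : ℚ_[p]) (n : ℕ) : ℚ_[p] :=
  ∑ k ∈ Finset.range (n+1), (n.choose k : ℚ_[p]) * gbinom x k * gbinom (x + (k : ℚ_[p])) k * 2^k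

/-!
Write `β_k(x) = C(x, k) C(x + k, k)`, so that `t_n(x)` is the binomial transform of `2 ^ k β_k(x)`,
and put `G_N(x) = (2x + 1) ∑_{n < N} t_n(x) ^ 2`. The relations
`(x + 1 - k) β_k(x + 1) = (x + 1 + k) β_k(x)` and
`(k + 1) (β_{k+1}(x + 1) - β_{k+1}(x)) = 2 (x + 1 + k) β_k(x)` become first-order recurrences for
`t_n(x + 1) ± t_n(x)`, by which `4 (x + 1) (G_N(x + 1) + G_N(x))` telescopes to a multiple of
`N ^ 2`. For `N = p` this gives `G_p(x + 1) ≡ -G_p(x)` modulo `p ^ 2` as long as `x + 1` is a unit,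
which reduces the congruence to the case `p ∣ x`. There `p ∣ β_k(x)` for `0 < k < p`, hence
`t_n(x) ≡ 1` modulo `p` for `n < p`, and `∑ t_n(x) ^ 2 ≡ 2 ∑ t_n(x) - p` modulo `p ^ 2`, where the
linear sum is `∑_{k < p} C(p, k + 1) 2 ^ k β_k(x) ≡ p + x`.
-/

section BinomialTransform

/-- The binomial transform `(c_k)_k ↦ (∑_{k ≤ n} C(n, k) c_k)_n`, as a linear endomorphism of the
space of sequences. -/
def binomialTransform (R : Type*) [CommSemiring R] : (ℕ → R) →ₗ[R] (ℕ → R) where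
  toFun c n := ∑ k ∈ Finset.range (n + 1), (n.choose k : R) * c k
  map_add' c e := by
    ext n
    simp only [Pi.add_apply, mul_add, Finset.sum_add_distrib]
  map_smul' a c := by
    ext n
    simp only [Pi.smul_apply, smul_eq_mul, RingHom.id_apply, Finset.mul_sum, mul_left_comm]

section CommSemiring

variable {R : Type*} [CommSemiring R] (c : ℕ → R) (n : ℕ)

lemma binomialTransform_apply :
    binomialTransform R c n = ∑ k ∈ Finset.range (n + 1), (n.choose k : R) * c k :=
  rfl

lemma binomialTransform_zero_right : binomialTransform R c 0 = c 0 := by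
  simp [binomialTransform_apply]

lemma sum_range_succ_choose_succ_mul :
    ∑ k ∈ Finset.range (n + 1), ((n + 1).choose (k + 1) : R) * c k =
      binomialTransform R c n + ∑ k ∈ Finset.range n, (n.choose (k + 1) : R) * c k := by
  have last_eq_zero : (n.choose (n + 1) : R) * c n = 0 := by simp
  simp only [Nat.choose_succ_succ', Nat.cast_add, add_mul, Finset.sum_add_distrib]
  rw [Finset.sum_range_succ (fun k ↦ (n.choose (k + 1) : R) * c k), last_eq_zero, add_zero,
    binomialTransform_apply]

lemma binomialTransform_succ :
    binomialTransform R c (n + 1) =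
      binomialTransform R c n + binomialTransform R (fun k ↦ c (k + 1)) n := by
  rw [binomialTransform_apply, Finset.sum_range_succ', sum_range_succ_choose_succ_mul,
    binomialTransform_apply c, Finset.sum_range_succ' _ n]
  simp only [Nat.choose_zero_right]
  ring

lemma succ_mul_binomialTransform_shift :
    (n + 1 : R) * binomialTransform R (fun k ↦ c (k + 1)) n =
      binomialTransform R (fun k ↦ k * c k) (n + 1) := by
  rw [binomialTransform_apply, binomialTransform_apply, Finset.sum_range_succ' _ (n + 1),
    Finset.mul_sum]
  simp only [Nat.cast_zero, zero_mul, mul_zero, add_zero]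
  refine Finset.sum_congr rfl fun k _ ↦ ?_
  have absorption : (n + 1 : R) * n.choose k = (n + 1).choose (k + 1) * (k + 1) := by
    simpa using congrArg (Nat.cast (R := R)) (Nat.add_one_mul_choose_eq n k)
  rw [← mul_assoc, absorption, mul_assoc, Nat.cast_succ]

lemma sum_range_binomialTransform (N : ℕ) :
    ∑ n ∈ Finset.range N, binomialTransform R c n =
      ∑ k ∈ Finset.range N, (N.choose (k + 1) : R) * c k := by
  induction N with
  | zero => simp
  | succ N ih => rw [Finset.sum_range_succ, ih, sum_range_succ_choose_succ_mul, add_comm]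

end CommSemiring

section CommRing

variable {R : Type*} [CommRing R]

lemma succ_mul_binomialTransform_succ_sub (c : ℕ → R) (n : ℕ) :
    (n + 1 : R) * (binomialTransform R c (n + 1) - binomialTransform R c n) =
      binomialTransform R (fun k ↦ k * c k) (n + 1) := by
  rw [← succ_mul_binomialTransform_shift, binomialTransform_succ, add_sub_cancel_left]

lemma natCast_dvd_binomialTransform_natCast_mul (c : ℕ → R) (n : ℕ) :
    (n : R) ∣ binomialTransform R (fun k ↦ k * c k) n := by
  cases n with
  | zero => simp [binomialTransform_zero_right]
  | succ n =>
    rw [← succ_mul_binomialTransform_succ_sub, Nat.cast_succ]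
    exact dvd_mul_right _ _

variable {y : R} {s d : ℕ → R}

lemma four_mul_sum_binomialTransform_eq (hd0 : d 0 = 0) (hs : ∀ k : ℕ, k * s k = y * d k)
    (hd : ∀ k : ℕ, (k + 1 : R) * d (k + 1) + 2 * (k * d k) = 2 * y * s k) (N : ℕ) :
    4 * y * ∑ n ∈ Finset.range N,
        (y * (binomialTransform R s n ^ 2 + binomialTransform R d n ^ 2) +
          binomialTransform R s n * binomialTransform R d n) =
      4 * (y * binomialTransform R d N) *
          (N * binomialTransform R s N - y * binomialTransform R d N) -
        binomialTransform R (fun k ↦ k * d k) N ^ 2 := by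
  have s_step (n : ℕ) : (n + 1 : R) * (binomialTransform R s (n + 1) - binomialTransform R s n) =
      y * binomialTransform R d (n + 1) := by
    rw [succ_mul_binomialTransform_succ_sub, funext hs]
    exact congrFun (map_smul (binomialTransform R) y d) (n + 1)
  have d_step (n : ℕ) := succ_mul_binomialTransform_succ_sub d n
  have kd_step (n : ℕ) : binomialTransform R (fun k ↦ k * d k) (n + 1) +
      binomialTransform R (fun k ↦ k * d k) n = 2 * y * binomialTransform R s n := by
    have h : (fun k : ℕ ↦ ((k + 1 : ℕ) : R) * d (k + 1)) + (2 : R) • (fun k : ℕ ↦ (k : R) * d k) =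
        (2 * y) • s := by
      ext k
      simpa using hd k
    have := congrFun (congrArg (binomialTransform R) h) n
    simp only [map_add, map_smul, Pi.add_apply, Pi.smul_apply, smul_eq_mul] at this
    rw [binomialTransform_succ]
    linear_combination this
  induction N with
  | zero => simp [binomialTransform_zero_right, hd0]
  | succ N ih =>
    rw [Finset.sum_range_succ, mul_add, ih, Nat.cast_succ]
    linear_combination -4 * y * binomialTransform R d (N + 1) * s_step N -
      4 * y * binomialTransform R s N * d_step N +
      (binomialTransform R (fun k ↦ k * d k) (N + 1) - binomialTransform R (fun k ↦ k * d k) N -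
        2 * y * binomialTransform R s N) * kd_step N

theorem sq_dvd_four_mul_sum_binomialTransform (hd0 : d 0 = 0) (hs : ∀ k : ℕ, k * s k = y * d k)
    (hd : ∀ k : ℕ, (k + 1 : R) * d (k + 1) + 2 * (k * d k) = 2 * y * s k) (N : ℕ) :
    (N : R) ^ 2 ∣ 4 * y * ∑ n ∈ Finset.range N,
      (y * (binomialTransform R s n ^ 2 + binomialTransform R d n ^ 2) +
        binomialTransform R s n * binomialTransform R d n) := by
  have dvd_d : (N : R) ∣ y * binomialTransform R d N := by
    have := natCast_dvd_binomialTransform_natCast_mul s N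
    rw [funext hs] at this
    exact this.trans (congrFun (map_smul (binomialTransform R) y d) N).dvd
  rw [four_mul_sum_binomialTransform_eq hd0 hs hd, sq (N : R)]
  refine dvd_sub (mul_dvd_mul (dvd_d.mul_left 4) (dvd_sub (dvd_mul_right _ _) dvd_d)) ?_
  rw [← sq]
  exact pow_dvd_pow_of_dvd (natCast_dvd_binomialTransform_natCast_mul d N) 2

end CommRing

end BinomialTransform

section BinomialRing

variable {R : Type*} [CommRing R] [BinomialRing R] (x : R) (k n : ℕ)

lemma succ_mul_choose_succ : (k + 1 : R) * Ring.choose x (k + 1) = (x - k) * Ring.choose x k := by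
  have := Ring.choose_smul_choose x k.le_succ
  rw [Nat.succ_eq_add_one, Nat.add_sub_cancel_left, Ring.choose_one_right,
    Nat.choose_succ_self_right, nsmul_eq_mul, Nat.cast_succ] at this
  rw [this, mul_comm]

lemma succ_mul_choose_add_one_succ :
    (k + 1 : R) * Ring.choose (x + 1) (k + 1) = (x + 1) * Ring.choose x k := by
  simpa using Ring.choose_add_smul_choose x k 1

lemma sub_mul_choose_add_one : (x + 1 - k) * Ring.choose (x + 1) k = (x + 1) * Ring.choose x k := by
  rw [← succ_mul_choose_succ, succ_mul_choose_add_one_succ]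

/-- The product `C(x, k) C(x + k, k)`, i.e. the coefficient of `u ^ k` in the Legendre function
`P_x(1 + 2u)`. -/
def legendreCoeff : R :=
  Ring.choose x k * Ring.choose (x + k) k

lemma legendreCoeff_zero_right : legendreCoeff x 0 = 1 := by
  simp [legendreCoeff]

lemma succ_sq_mul_legendreCoeff_succ :
    (k + 1 : R) ^ 2 * legendreCoeff x (k + 1) = (x - k) * (x + k + 1) * legendreCoeff x k := by
  have h₁ := succ_mul_choose_succ x k
  have h₂ := succ_mul_choose_add_one_succ (x + k) k
  rw [add_assoc x] at h₂
  simp only [legendreCoeff, Nat.cast_succ]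
  linear_combination (k + 1 : R) * Ring.choose (x + (k + 1)) (k + 1) * h₁ +
    (x - k) * Ring.choose x k * h₂

lemma dvd_succ_mul_legendreCoeff_succ : x ∣ (k + 1 : R) * legendreCoeff x (k + 1) := by
  have h := succ_mul_choose_add_one_succ (x - 1) k
  rw [sub_add_cancel] at h
  rw [legendreCoeff, ← mul_assoc, h, mul_assoc]
  exact dvd_mul_right _ _

lemma sub_mul_legendreCoeff_add_one :
    (x + 1 - k) * legendreCoeff (x + 1) k = (x + 1 + k) * legendreCoeff x k := by
  have h₁ := sub_mul_choose_add_one x k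
  have h₂ := sub_mul_choose_add_one (x + k) k
  rw [add_right_comm] at h₂
  simp only [legendreCoeff]
  linear_combination Ring.choose (x + 1 + k) k * h₁ + Ring.choose x k * h₂

lemma succ_mul_legendreCoeff_succ_add_one_sub :
    (k + 1 : R) * (legendreCoeff (x + 1) (k + 1) - legendreCoeff x (k + 1)) =
      2 * (x + 1 + k) * legendreCoeff x k := by
  have h₁ := succ_mul_choose_add_one_succ x k
  have h₂ := succ_mul_choose_succ x k
  have h₃ := Ring.choose_succ_succ (x + k + 1) k
  have h₄ := sub_mul_choose_add_one (x + k) k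
  have h₅ := succ_mul_choose_add_one_succ (x + k) k
  have e₁ : x + 1 + (k + 1 : ℕ) = x + k + 1 + 1 := by push_cast; ring
  have e₂ : x + (k + 1 : ℕ) = x + k + 1 := by push_cast; ring
  simp only [legendreCoeff, e₁, e₂]
  linear_combination Ring.choose (x + k + 1 + 1) (k + 1) * h₁ -
    Ring.choose (x + k + 1) (k + 1) * h₂ +
    Ring.choose x k * ((x + 1) * h₃ + h₄ + h₅)

/-- The sequence `t_n(x) = ∑_k C(n, k) C(x, k) C(x + k, k) 2 ^ k` over a binomial ring; over `ℚ_[p]`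
it is `tseq`, and over `ℤ_[p]` it makes the integrality of `tseq` automatic. -/
def ringTseq : ℕ → R :=
  binomialTransform R fun k ↦ legendreCoeff x k * 2 ^ k

lemma map_ringTseq {S : Type*} [CommRing S] [BinomialRing S] (f : R →+* S) :
    f (ringTseq x n) = ringTseq (f x) n := by
  simp [ringTseq, binomialTransform_apply, legendreCoeff, Ring.map_choose, map_ofNat f 2]

theorem sq_dvd_four_mul_sum_ringTseq_sq_add (N : ℕ) :
    (N : R) ^ 2 ∣ 4 * (x + 1) * ((2 * (x + 1) + 1) * ∑ n ∈ Finset.range N, ringTseq (x + 1) n ^ 2 +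
      (2 * x + 1) * ∑ n ∈ Finset.range N, ringTseq x n ^ 2) := by
  let a (k : ℕ) : R := legendreCoeff x k * 2 ^ k
  let b (k : ℕ) : R := legendreCoeff (x + 1) k * 2 ^ k
  have h := sq_dvd_four_mul_sum_binomialTransform (y := x + 1) (s := b + a) (d := b - a)
    (by simp [a, b, legendreCoeff_zero_right])
    (fun k ↦ by
      simp only [a, b, Pi.add_apply, Pi.sub_apply]
      linear_combination -2 ^ k * sub_mul_legendreCoeff_add_one x k)
    (fun k ↦ by
      simp only [a, b, Pi.add_apply, Pi.sub_apply]
      linear_combination 2 ^ (k + 1) * succ_mul_legendreCoeff_succ_add_one_sub x k -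
        2 ^ (k + 1) * sub_mul_legendreCoeff_add_one x k) N
  convert h using 2
  simp only [map_add, map_sub, Pi.add_apply, Pi.sub_apply, Finset.mul_sum,
    ← Finset.sum_add_distrib]
  refine Finset.sum_congr rfl fun n _ ↦ ?_
  simp only [ringTseq, a, b]
  ring

end BinomialRing

section PadicInt

variable {p : ℕ} [hp : Fact p.Prime] {z : ℤ_[p]}

lemma padicInt_isUnit_natCast {k : ℕ} (hk0 : k ≠ 0) (hkp : k < p) : IsUnit (k : ℤ_[p]) :=
  PadicInt.isUnit_iff.2 <| PadicInt.norm_natCast_eq_one_iff.2 <|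
    Nat.coprime_of_lt_prime hk0 hkp hp.out

lemma dvd_legendreCoeff (hz : (p : ℤ_[p]) ∣ z) {k : ℕ} (hk0 : k ≠ 0) (hkp : k < p) :
    (p : ℤ_[p]) ∣ legendreCoeff z k := by
  obtain ⟨k, rfl⟩ := Nat.exists_eq_succ_of_ne_zero hk0
  rw [← (padicInt_isUnit_natCast hk0 hkp).dvd_mul_left, Nat.cast_succ]
  exact hz.trans (dvd_succ_mul_legendreCoeff_succ z k)

lemma sq_dvd_succ_mul_legendreCoeff_succ_sub (hz : (p : ℤ_[p]) ∣ z) {k : ℕ} (hk : k + 1 < p) :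
    (p : ℤ_[p]) ^ 2 ∣ (k + 1) * legendreCoeff z (k + 1) - (-1) ^ k * z := by
  induction k with
  | zero =>
    have recurrence := succ_sq_mul_legendreCoeff_succ z 0
    simp only [legendreCoeff_zero_right, Nat.cast_zero] at recurrence ⊢
    convert pow_dvd_pow_of_dvd hz 2 using 1
    linear_combination recurrence
  | succ k ih =>
    have isUnit_succ : IsUnit ((k + 1 + 1 : ℕ) : ℤ_[p]) :=
      padicInt_isUnit_natCast k.succ.succ_ne_zero hk
    have dvd_mul : (p : ℤ_[p]) ^ 2 ∣ z * legendreCoeff z (k + 1) := by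
      rw [sq]
      exact mul_dvd_mul hz (dvd_legendreCoeff hz k.succ_ne_zero (by lia))
    have recurrence := succ_sq_mul_legendreCoeff_succ z (k + 1)
    push_cast at isUnit_succ recurrence ⊢
    rw [← isUnit_succ.dvd_mul_left]
    convert dvd_sub (dvd_mul.mul_left (z + 1)) ((ih (by lia)).mul_left (k + 1 + 1 : ℤ_[p])) using 1
    linear_combination recurrence

lemma dvd_two_pow_pred_sub_one (hp2 : p ≠ 2) : (p : ℤ_[p]) ∣ 2 ^ (p - 1) - 1 := by
  have coprime : IsCoprime (2 : ℤ) p :=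
    Nat.isCoprime_iff_coprime.2 ((Nat.coprime_primes Nat.prime_two hp.out).2 hp2.symm)
  simpa using Int.cast_dvd_cast (α := ℤ_[p]) _ _
    (Int.ModEq.pow_card_sub_one_eq_one hp.out coprime).symm.dvd

lemma sq_dvd_legendreCoeff_pred_sub (hp2 : p ≠ 2) (hz : (p : ℤ_[p]) ∣ z) :
    (p : ℤ_[p]) ^ 2 ∣ legendreCoeff z (p - 1) - z := by
  have dvd_coeff : (p : ℤ_[p]) ∣ legendreCoeff z (p - 1) :=
    dvd_legendreCoeff hz (Nat.sub_ne_zero_of_lt hp.out.one_lt) (Nat.sub_one_lt hp.out.ne_zero)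
  obtain ⟨q, rfl⟩ := Nat.exists_eq_add_of_le' hp.out.two_le
  have odd_q : Odd q := by
    have := hp.out.odd_of_ne_two hp2
    grind
  have dvd_succ_mul_sub := sq_dvd_succ_mul_legendreCoeff_succ_sub hz (Nat.lt_succ_self (q + 1))
  have dvd_mul : ((q + 2 : ℕ) : ℤ_[q + 2]) ^ 2 ∣ (q + 2 : ℕ) * legendreCoeff z (q + 1) := by
    rw [sq]
    exact mul_dvd_mul_left _ dvd_coeff
  convert dvd_sub dvd_mul dvd_succ_mul_sub using 1
  rw [odd_q.neg_one_pow]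
  push_cast
  ring

lemma sq_dvd_sum_ringTseq_sub (hp2 : p ≠ 2) (hz : (p : ℤ_[p]) ∣ z) :
    (p : ℤ_[p]) ^ 2 ∣ ∑ n ∈ Finset.range p, ringTseq z n - (p + z) := by
  have dvd_last : (p : ℤ_[p]) ^ 2 ∣ legendreCoeff z (p - 1) * 2 ^ (p - 1) - z := by
    have dvd_mul := mul_dvd_mul hz (dvd_two_pow_pred_sub_one hp2)
    rw [← sq] at dvd_mul
    convert dvd_add ((sq_dvd_legendreCoeff_pred_sub hp2 hz).mul_right (2 ^ (p - 1))) dvd_mul using 1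
    ring
  obtain ⟨q, rfl⟩ := Nat.exists_eq_add_of_le' hp.out.two_le
  have dvd_middle : ((q + 2 : ℕ) : ℤ_[q + 2]) ^ 2 ∣ ∑ k ∈ Finset.range q,
      ((q + 2).choose (k + 1 + 1) : ℤ_[q + 2]) * (legendreCoeff z (k + 1) * 2 ^ (k + 1)) := by
    refine Finset.dvd_sum fun k hk ↦ ?_
    have := Finset.mem_range.1 hk
    rw [sq]
    exact mul_dvd_mul (Nat.cast_dvd_cast (hp.out.dvd_choose_self (by lia) (by lia)))
      ((dvd_legendreCoeff hz k.succ_ne_zero (by lia)).mul_right _)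
  convert dvd_add dvd_middle dvd_last using 1
  simp only [ringTseq]
  rw [sum_range_binomialTransform, Finset.sum_range_succ, Finset.sum_range_succ']
  simp only [legendreCoeff_zero_right, zero_add, Nat.choose_one_right, Nat.choose_self,
    Nat.cast_one, pow_zero, Nat.add_succ_sub_one]
  ring

lemma dvd_ringTseq_sub_one (hz : (p : ℤ_[p]) ∣ z) {n : ℕ} (hn : n < p) :
    (p : ℤ_[p]) ∣ ringTseq z n - 1 := by
  rw [ringTseq, binomialTransform_apply, Finset.sum_range_succ']
  simp only [legendreCoeff_zero_right, Nat.choose_zero_right, Nat.cast_one, pow_zero, mul_one,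
    add_sub_cancel_right]
  refine Finset.dvd_sum fun k hk ↦ ?_
  have := Finset.mem_range.1 hk
  exact ((dvd_legendreCoeff hz k.succ_ne_zero (by lia)).mul_right _).mul_left _

lemma sq_dvd_sum_ringTseq_sq_sub (hp2 : p ≠ 2) (hz : (p : ℤ_[p]) ∣ z) :
    (p : ℤ_[p]) ^ 2 ∣ ∑ n ∈ Finset.range p, ringTseq z n ^ 2 - (p + 2 * z) := by
  have dvd_sum_sq : (p : ℤ_[p]) ^ 2 ∣ ∑ n ∈ Finset.range p, (ringTseq z n - 1) ^ 2 :=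
    Finset.dvd_sum fun n hn ↦
      pow_dvd_pow_of_dvd (dvd_ringTseq_sub_one hz (Finset.mem_range.1 hn)) 2
  convert dvd_add dvd_sum_sq ((sq_dvd_sum_ringTseq_sub hp2 hz).mul_left 2) using 1
  simp only [sub_sq, Finset.sum_add_distrib, Finset.sum_sub_distrib, ← Finset.mul_sum,
    ← Finset.sum_mul]
  simp only [mul_one, one_pow, Finset.sum_const, Finset.card_range, nsmul_eq_mul]
  ring

lemma sq_dvd_two_mul_add_one_mul_sum_of_dvd (hp2 : p ≠ 2) (hz : (p : ℤ_[p]) ∣ z) :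
    (p : ℤ_[p]) ^ 2 ∣
      (2 * z + 1) * ∑ n ∈ Finset.range p, ringTseq z n ^ 2 - (p + 2 * z) := by
  have dvd_mul : (p : ℤ_[p]) ^ 2 ∣ z * (p + 2 * z) := by
    rw [sq]
    exact mul_dvd_mul hz (dvd_add dvd_rfl (hz.mul_left 2))
  convert dvd_add ((sq_dvd_sum_ringTseq_sq_sub hp2 hz).mul_left (2 * z + 1))
    (dvd_mul.mul_left 2) using 1
  ring

lemma sq_dvd_two_mul_add_one_mul_sum_add (hp2 : p ≠ 2) (hz : IsUnit (z + 1)) :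
    (p : ℤ_[p]) ^ 2 ∣ (2 * (z + 1) + 1) * ∑ n ∈ Finset.range p, ringTseq (z + 1) n ^ 2 +
      (2 * z + 1) * ∑ n ∈ Finset.range p, ringTseq z n ^ 2 := by
  have isUnit_two : IsUnit (2 : ℤ_[p]) :=
    padicInt_isUnit_natCast two_ne_zero (hp.out.two_le.lt_of_ne' hp2)
  have isUnit_four_mul : IsUnit (4 * (z + 1)) := by
    convert (isUnit_two.pow 2).mul hz using 2
    norm_num
  exact isUnit_four_mul.dvd_mul_left.1 (sq_dvd_four_mul_sum_ringTseq_sq_add z p)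

theorem sq_dvd_two_mul_add_one_mul_sum_ringTseq_sq_sub (hp2 : p ≠ 2) (hz : (p : ℤ_[p]) ∣ z) {m : ℕ}
    (hm : m < p) :
    (p : ℤ_[p]) ^ 2 ∣ (2 * (z + m) + 1) * ∑ n ∈ Finset.range p, ringTseq (z + m) n ^ 2 -
      (-1) ^ m * (p + 2 * z) := by
  induction m with
  | zero => simpa using sq_dvd_two_mul_add_one_mul_sum_of_dvd hp2 hz
  | succ m ih =>
    have isUnit_succ : IsUnit (z + m + 1) := by
      by_contra h
      rw [PadicInt.not_isUnit_iff, PadicInt.norm_lt_one_iff_dvd, add_assoc, dvd_add_right hz,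
        ← Nat.cast_succ] at h
      exact PadicInt.prime_p.not_isUnit
        (isUnit_of_dvd_unit h (padicInt_isUnit_natCast m.succ_ne_zero hm))
    rw [Nat.cast_succ, ← add_assoc]
    convert dvd_sub (sq_dvd_two_mul_add_one_mul_sum_add hp2 isUnit_succ) (ih (by lia)) using 1
    ring

lemma norm_coe_le_pow_iff_dvd (n : ℕ) :
    ‖(z : ℚ_[p])‖ ≤ (p : ℝ) ^ (-n : ℤ) ↔ (p : ℤ_[p]) ^ n ∣ z := by
  rw [← Ideal.mem_span_singleton, ← PadicInt.norm_le_pow_iff_mem_span_pow, PadicInt.norm_def]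

end PadicInt

section Padic

variable {p : ℕ} [Fact p.Prime]

lemma gbinom_eq_choose (x : ℚ_[p]) (k : ℕ) : gbinom x k = Ring.choose x k := by
  rw [gbinom, Ring.choose_eq_smul, Polynomial.descPochhammer_smeval_eq_ascPochhammer,
    Polynomial.ascPochhammer_smeval_eq_eval, ← descPochhammer_eval_eq_ascPochhammer,
    descPochhammer_eval_eq_prod_range, smul_eq_mul, div_eq_inv_mul]

lemma tseq_eq_ringTseq (x : ℚ_[p]) : tseq x = ringTseq x := by
  ext n
  simp only [tseq, ringTseq, binomialTransform_apply, legendreCoeff, gbinom_eq_choose, mul_assoc]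

lemma tseq_coe (z : ℤ_[p]) (n : ℕ) : tseq (z : ℚ_[p]) n = ringTseq z n := by
  rw [tseq_eq_ringTseq]
  exact (map_ringTseq z n PadicInt.Coe.ringHom).symm

lemma norm_eq_one_of_not_norm_le_inv {x : ℚ_[p]} (hx : ‖x‖ ≤ 1) (h : ¬ ‖x‖ ≤ (p : ℝ)⁻¹) :
    ‖x‖ = 1 := by
  refine hx.eq_of_not_lt fun hlt ↦ h ?_
  simpa using (Padic.norm_le_pow_iff_norm_lt_pow_add_one x (-1)).2 (by simpa using hlt)

end Padic

lemma norm_sub_div_of_norm_eq_one {K : Type*} [NormedField K] {u : K} (hu : ‖u‖ = 1) (a b : K) :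
    ‖a - b / u‖ = ‖u * a - b‖ := by
  have hu0 : u ≠ 0 := norm_ne_zero_iff.1 (hu ▸ one_ne_zero)
  rw [← one_mul ‖a - b / u‖, ← hu, ← norm_mul, mul_sub, mul_div_cancel₀ b hu0]

theorem stmt_13_general (p : ℕ) [Fact p.Prime] (hp : p ≠ 2) (x : ℚ_[p]) (m : ℕ) (hm : m < p)
    (hxm : ‖x - m‖ ≤ (p : ℝ)⁻¹) :
    ‖(2 * x + 1) * ∑ n ∈ Finset.range p, tseq x n ^ 2 -
        (-1) ^ m * ((p : ℚ_[p]) + 2 * (x - m))‖ ≤ (p : ℝ) ^ (-2 : ℤ) := by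
  have inv_le_one : (p : ℝ)⁻¹ ≤ 1 := Nat.cast_inv_le_one p
  obtain ⟨z, hz⟩ : ∃ z : ℤ_[p], (z : ℚ_[p]) = x - m := ⟨⟨x - m, hxm.trans inv_le_one⟩, rfl⟩
  obtain rfl : x = (z + m : ℤ_[p]) := by simp [hz]
  have dvd_z : (p : ℤ_[p]) ∣ z := by
    simpa using (norm_coe_le_pow_iff_dvd 1).1 (by simpa using hxm)
  have := (norm_coe_le_pow_iff_dvd 2).2 (sq_dvd_two_mul_add_one_mul_sum_ringTseq_sq_sub hp dvd_z hm)
  simp only [tseq_coe]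
  rw [← hz]
  push_cast [PadicInt.coe_sum] at this ⊢
  exact this

theorem stmt_13 (p : ℕ) [Fact p.Prime] (hp : p ≠ 2) (x : ℚ_[p]) (hx : ‖x‖ ≤ 1)
    (m : ℕ) (hm : m < p) (hxm : ‖x - m‖ ≤ (p : ℝ)⁻¹)
    (h2x : ¬ ‖2*x + 1‖ ≤ (p : ℝ)⁻¹) :
    ‖(∑ n ∈ Finset.range p, (tseq x n)^2) -
        (-1)^m * ((p : ℚ_[p]) + 2*(x - m)) / (2*x + 1)‖ ≤ (p : ℝ) ^ (-2 : ℤ) := by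
  have norm_le_one : ‖2 * x + 1‖ ≤ 1 :=
    add_mem (mul_mem (ofNat_mem (PadicInt.subring p) 2) hx) (one_mem _)
  rw [norm_sub_div_of_norm_eq_one (norm_eq_one_of_not_norm_le_inv norm_le_one h2x)]
  exact stmt_13_general p hp x m hm hxm
end
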